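/- Let e_1,…,e_n ∈ ℤ^d and fix j ∈ {1,…,n}. Let (ν,s) and (ν',s') satisfy hypotheses (a)–(d): ⟨ν,e_i⟩ > 0 and ⟨ν',e_i⟩ > 0 for all i; for every r ∈ {1,…,j} the minimizing r-element subsets of Σ_{i∈S}⟨ν,e_i⟩ and of Σ_{i∈S}⟨ν',e_i⟩ coincide; φ_j(ν) ≤ s with s < φ_{j+1}(ν) if j < n; and φ_j(ν') ≤ s' with s' < φ_{j+1}(ν') if j < n. Let l be the dimension of the ℚ-span of {e_i : ⟨ν,e_i⟩ ≤ s}. Then l also equals the dimension of the ℚ-span of {e_i : ⟨ν',e_i⟩ ≤ s'}, and for every r ∈ {1,…,l}, an r-element subset S ⊆ {1,…,n} with (e_i)_{i∈S} linearly independent satisfies Σ_{i∈S}⟨ν,e_i⟩ = ord_{J_r}(ν) if and only if it satisfies Σ_{i∈S}⟨ν',e_i⟩ = ord_{J_r}(ν'); that is, ν and ν' define the same face of the Newton polyhedron of the r-th logarithmic jacobian ideal for every r ≤ l. -/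

import Mathlib

/-- Support function of the Newton polyhedron of the `j`-th ideal of sums of
combinations, for integral vectors `e`. -/
noncomputable def ordC {d n : ℕ} (e : Fin n → Fin d → ℤ) (j : ℕ) (ν : Fin d → ℝ) : ℝ :=
  sInf {x : ℝ | ∃ S : Finset (Fin n), S.card = j ∧ x = ∑ i ∈ S, ∑ k, ν k * (e i k : ℝ)}

/-- `φ_j := ord_{C_j} − ord_{C_{j−1}}` (with `ord_{C_0} = 0`). -/
noncomputable def phiC {d n : ℕ} (e : Fin n → Fin d → ℤ) (j : ℕ) (ν : Fin d → ℝ) : ℝ :=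
  ordC e j ν - ordC e (j - 1) ν

/-- Support function of the Newton polyhedron of the `r`-th logarithmic jacobian
ideal: minimum over `r`-element subsets `S` with `(e i)_{i ∈ S}` linearly
independent of `∑_{i∈S} ⟨ν, e i⟩`. -/
noncomputable def ordJ {d n : ℕ} (e : Fin n → Fin d → ℤ) (r : ℕ) (ν : Fin d → ℝ) : ℝ :=
  sInf {x : ℝ | ∃ S : Finset (Fin n), S.card = r ∧
    LinearIndependent ℝ (fun i : S => ((fun kk => (e i.1 kk : ℝ)) : Fin d → ℝ)) ∧
    x = ∑ i ∈ S, ∑ k, ν k * (e i k : ℝ)}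

open Finset

section Selection

variable {ι : Type*} [DecidableEq ι]

theorem sum_insert_erase_eq {w : ι → ℝ} {S : Finset ι} {a b : ι} (ha : a ∈ S) (hb : b ∉ S) :
    ∑ i ∈ insert b (S.erase a), w i = ∑ i ∈ S, w i - w a + w b := by
  rw [sum_insert (fun h => hb (mem_of_mem_erase h)), ← add_sum_erase S w ha]
  ring

theorem card_insert_erase_eq {S : Finset ι} {a b : ι} (ha : a ∈ S) (hb : b ∉ S) :
    (insert b (S.erase a)).card = S.card := by
  rw [card_insert_of_notMem (fun h => hb (mem_of_mem_erase h)), card_erase_add_one ha]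

/-- A set all of whose weights are at most `c`, and which contains every index of weight less
than `c`, has minimal weight among the sets of its cardinality. -/
theorem sum_le_sum_of_threshold {w : ι → ℝ} {c : ℝ} {B T : Finset ι} (hcard : T.card = B.card)
    (hle : ∀ i ∈ B, w i ≤ c) (hge : ∀ i, i ∉ B → c ≤ w i) : ∑ i ∈ B, w i ≤ ∑ i ∈ T, w i := by
  have h₁ : ∑ i ∈ B \ T, w i ≤ (B \ T).card • c :=
    sum_le_card_nsmul _ _ _ fun i hi => hle i (mem_sdiff.1 hi).1
  have h₂ : (T \ B).card • c ≤ ∑ i ∈ T \ B, w i :=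
    card_nsmul_le_sum _ _ _ fun i hi => hge i (mem_sdiff.1 hi).2
  rw [card_sdiff_comm hcard] at h₂
  have h₃ := sum_sdiff_sub_sum_sdiff (s₁ := B) (s₂ := T) (f := w)
  linarith

end Selection

section Independence

variable {K V ι : Type*} [Field K] [AddCommGroup V] [Module K V] {v : ι → V}

theorem finrank_span_image_le_card (S : Finset ι) :
    Module.finrank K (Submodule.span K (v '' S)) ≤ S.card := by
  classical
  rw [← coe_image]
  exact (finrank_span_finset_le_card _).trans card_image_le

theorem exists_notMem_span_of_card_lt [FiniteDimensional K V] {A B : Finset ι}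
    (h : B.card < Module.finrank K (Submodule.span K (v '' A))) :
    ∃ b ∈ A, v b ∉ Submodule.span K (v '' B) := by
  by_contra! hA
  have hle : Submodule.span K (v '' A) ≤ Submodule.span K (v '' B) := by
    rw [Submodule.span_le]
    rintro _ ⟨i, hi, rfl⟩
    exact hA i hi
  exact h.not_ge ((Submodule.finrank_mono hle).trans (finrank_span_image_le_card B))

variable [DecidableEq ι]

/-- Steinitz exchange between linearly independent subfamilies of the same size. -/
theorem LinearIndepOn.exists_exchange {S T : Finset ι} (hS : LinearIndepOn K v (S : Set ι))
    (hT : LinearIndepOn K v (T : Set ι)) (hcard : S.card = T.card) {b : ι} (hbT : b ∈ T)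
    (hbS : b ∉ S) :
    ∃ a ∈ S, a ∉ T ∧ LinearIndepOn K v (insert b (S.erase a) : Finset ι) := by
  have hsub : ((insert b (S ∩ T) : Finset ι) : Set ι) ⊆ T := by
    intro i hi
    simp only [coe_insert, coe_inter, Set.mem_insert_iff, Set.mem_inter_iff, mem_coe] at hi
    rcases hi with rfl | hi
    exacts [hbT, hi.2]
  obtain ⟨U, hUt, hsU, hspan, hU⟩ := exists_linearIndepOn_extension (hT.mono hsub)
    (t := (insert b S : Finset ι)) (by
      rw [coe_subset]; exact insert_subset_insert _ inter_subset_left)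
  lift U to Finset ι using (Finset.finite_toSet _).subset hUt
  rw [coe_subset] at hUt hsU
  have hcardU : S.card ≤ U.card := by
    have h₁ : Module.finrank K (Submodule.span K (v '' S)) = S.card := by
      have := finrank_span_eq_card hS
      rw [← Set.image_eq_range] at this
      simpa using this
    have h₂ := finrank_span_image_le_card (K := K) (v := v) U
    have : Module.Finite K (Submodule.span K (v '' (U : Set ι))) :=
      Module.Finite.span_of_finite K (U.finite_toSet.image v)
    rw [← h₁]
    refine (Submodule.finrank_mono (Submodule.span_le.2 ?_)).trans h₂
    exact (Set.image_mono (by simp)).trans hspan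
  obtain ⟨a, haS, haT, ha⟩ : ∃ a ∈ S, a ∉ T ∧ insert b (S.erase a) ⊆ U := by
    by_cases hSU : S ⊆ U
    · obtain ⟨a, haS, haT⟩ : ∃ a ∈ S, a ∉ T := by
        by_contra! h
        exact hbS (eq_of_subset_of_card_le h hcard.ge ▸ hbT)
      refine ⟨a, haS, haT, insert_subset (hsU (mem_insert_self _ _)) ?_⟩
      exact (erase_subset _ _).trans hSU
    · obtain ⟨a, haS, haU⟩ := not_subset.1 hSU
      refine ⟨a, haS, fun haT => haU (hsU ?_), ?_⟩
      · exact mem_insert_of_mem (mem_inter.2 ⟨haS, haT⟩)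
      · refine (eq_of_subset_of_card_le (s := U) (fun i hi => ?_) ?_).ge
        · have := hUt hi
          have : i ≠ a := fun h => haU (h ▸ hi)
          grind
        · rw [card_insert_erase_eq haS hbS]
          exact hcardU
  exact ⟨a, haS, haT, hU.mono (coe_subset.2 ha)⟩

/-- A linearly independent subfamily of minimal weight is detected by single exchanges. -/
theorem LinearIndepOn.forall_sum_le_iff_exchange [Finite ι] {w : ι → ℝ} {S : Finset ι}
    (hS : LinearIndepOn K v (S : Set ι)) :
    (∀ T : Finset ι, T.card = S.card ∧ LinearIndepOn K v (T : Set ι) →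
      ∑ i ∈ S, w i ≤ ∑ i ∈ T, w i) ↔
    ∀ a ∈ S, ∀ b ∉ S, LinearIndepOn K v (insert b (S.erase a) : Finset ι) → w a ≤ w b := by
  constructor
  · intro h a ha b hb hab
    have := h _ ⟨card_insert_erase_eq ha hb, hab⟩
    rw [sum_insert_erase_eq ha hb] at this
    linarith
  intro h T hT
  -- Among the candidates no heavier than `T`, take one with maximal intersection with `S`.
  obtain ⟨M, ⟨⟨hMcard, hM⟩, hMT⟩, hmax⟩ := Set.exists_max_image
    {M : Finset ι | (M.card = S.card ∧ LinearIndepOn K v (M : Set ι)) ∧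
      ∑ i ∈ M, w i ≤ ∑ i ∈ T, w i} (fun M => (M ∩ S).card) (Set.toFinite _) ⟨T, hT, le_rfl⟩
  by_cases hMS : M = S
  · exact hMS ▸ hMT
  exfalso
  have hne₁ : (M \ S).Nonempty := by
    rw [sdiff_nonempty]
    exact fun h' => hMS (eq_of_subset_of_card_le h' hMcard.ge)
  have hne₂ : (S \ M).Nonempty := by
    rw [sdiff_nonempty]
    exact fun h' => hMS (eq_of_subset_of_card_le h' hMcard.le).symm
  obtain ⟨b, hb, hbmin⟩ := exists_min_image (M \ S) w hne₁
  obtain ⟨a, ha, hamin⟩ := exists_min_image (S \ M) w hne₂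
  rw [mem_sdiff] at ha hb
  rcases le_or_gt (w a) (w b) with hab | hab
  · obtain ⟨c, hcM, hcS, hc⟩ := hM.exists_exchange hS hMcard ha.1 ha.2
    have hle := hbmin c (mem_sdiff.2 ⟨hcM, hcS⟩)
    have hmem := hmax (insert a (M.erase c)) ⟨⟨by
      rw [card_insert_erase_eq hcM ha.2, hMcard], hc⟩, by
      rw [sum_insert_erase_eq hcM ha.2]; linarith⟩
    refine hmem.not_gt (card_lt_card ?_)
    rw [ssubset_iff_of_subset (by grind)]
    exact ⟨a, by grind, by grind⟩
  · obtain ⟨c, hcS, hcM, hc⟩ := hS.exists_exchange hM hMcard.symm hb.1 hb.2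
    have := hamin c (mem_sdiff.2 ⟨hcS, hcM⟩)
    have := h c hcS b hb.2 hc
    linarith

/-- If `A` is a sublevel set of both `w` and `w'`, and `w'` respects the order of `w` on `A`,
then linearly independent subfamilies of minimal `w`-weight and of size at most the rank of `A`
also have minimal `w'`-weight. -/
theorem LinearIndepOn.forall_sum_le_of_sublevel [Finite ι] [FiniteDimensional K V]
    {w w' : ι → ℝ} {s s' : ℝ} {A S : Finset ι} (hA : ∀ i, i ∈ A ↔ w i ≤ s)
    (hA' : ∀ i, i ∈ A ↔ w' i ≤ s')
    (hord : ∀ a ∈ A, ∀ b ∈ A, w a ≤ w b → w' a ≤ w' b)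
    (hS : LinearIndepOn K v (S : Set ι))
    (hrank : S.card ≤ Module.finrank K (Submodule.span K (v '' A)))
    (hmin : ∀ T : Finset ι, T.card = S.card ∧ LinearIndepOn K v (T : Set ι) →
      ∑ i ∈ S, w i ≤ ∑ i ∈ T, w i) :
    ∀ T : Finset ι, T.card = S.card ∧ LinearIndepOn K v (T : Set ι) →
      ∑ i ∈ S, w' i ≤ ∑ i ∈ T, w' i := by
  rw [hS.forall_sum_le_iff_exchange] at hmin ⊢
  have hSA : S ⊆ A := by
    intro a ha
    by_contra haA
    obtain ⟨b, hbA, hb⟩ := exists_notMem_span_of_card_lt (v := v) (A := A) (B := S.erase a)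
      ((card_erase_lt_of_mem ha).trans_le hrank)
    have hbS : b ∉ S := fun hbS => hb (Submodule.subset_span
      ⟨b, mem_erase.2 ⟨fun h => haA (h ▸ hbA), hbS⟩, rfl⟩)
    have := hmin a ha b hbS (by
      rw [coe_insert]
      exact (hS.mono (coe_subset.2 (erase_subset _ _))).insert hb)
    exact haA ((hA a).2 (this.trans ((hA b).1 hbA)))
  intro a ha b hb hab
  by_cases hbA : b ∈ A
  · exact hord a (hSA ha) b hbA (hmin a ha b hb hab)
  · exact ((hA' a).1 (hSA ha)).trans (not_le.1 (mt (hA' b).2 hbA)).le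

end Independence

theorem eq_sInf_iff_forall_le {α : Type*} [Finite α] {P : α → Prop} {f : α → ℝ} {a : α}
    (ha : P a) : f a = sInf {x | ∃ b, P b ∧ x = f b} ↔ ∀ b, P b → f a ≤ f b := by
  have hfin : {x | ∃ b, P b ∧ x = f b}.Finite :=
    (Set.finite_range f).subset (by rintro _ ⟨b, -, rfl⟩; exact ⟨b, rfl⟩)
  constructor
  · rintro h b hb
    exact h ▸ csInf_le hfin.bddBelow ⟨b, hb, rfl⟩
  · intro h
    have hleast : IsLeast {x | ∃ b, P b ∧ x = f b} (f a) :=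
      ⟨⟨a, ha, rfl⟩, by rintro _ ⟨b, hb, rfl⟩; exact h b hb⟩
    exact hleast.csInf_eq.symm

section Orders

variable {d n : ℕ} {e : Fin n → Fin d → ℤ} {ν : Fin d → ℝ}

theorem sum_eq_ordC_iff {S : Finset (Fin n)} {r : ℕ} (hS : S.card = r) :
    ∑ i ∈ S, ∑ k, ν k * (e i k : ℝ) = ordC e r ν ↔
      ∀ T : Finset (Fin n), T.card = r →
        ∑ i ∈ S, ∑ k, ν k * (e i k : ℝ) ≤ ∑ i ∈ T, ∑ k, ν k * (e i k : ℝ) :=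
  eq_sInf_iff_forall_le (P := fun T : Finset (Fin n) => T.card = r)
    (f := fun T => ∑ i ∈ T, ∑ k, ν k * (e i k : ℝ)) hS

theorem exists_sum_eq_ordC {r : ℕ} (hr : r ≤ n) :
    ∃ S : Finset (Fin n), S.card = r ∧ ∑ i ∈ S, ∑ k, ν k * (e i k : ℝ) = ordC e r ν := by
  obtain ⟨T, -, hT⟩ := exists_subset_card_eq (s := (univ : Finset (Fin n))) (by simpa using hr)
  obtain ⟨S, hS, hmin⟩ := Set.exists_min_image {S : Finset (Fin n) | S.card = r}
    (fun S => ∑ i ∈ S, ∑ k, ν k * (e i k : ℝ)) (Set.toFinite _) ⟨T, hT⟩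
  exact ⟨S, hS, (sum_eq_ordC_iff hS).2 hmin⟩

theorem ordC_le_sum (S : Finset (Fin n)) :
    ordC e S.card ν ≤ ∑ i ∈ S, ∑ k, ν k * (e i k : ℝ) := by
  obtain ⟨M, hM, hmin⟩ := exists_sum_eq_ordC (e := e) (ν := ν) (card_finset_fin_le S)
  rw [← hmin]
  exact (sum_eq_ordC_iff hM).1 hmin S rfl

theorem mem_iff_le_of_sum_eq_ordC {j : ℕ} {s : ℝ}
    (h₁ : phiC e j ν ≤ s) (h₂ : j < n → s < phiC e (j + 1) ν) {M : Finset (Fin n)}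
    (hM : M.card = j) (hmin : ∑ i ∈ M, ∑ k, ν k * (e i k : ℝ) = ordC e j ν) (i : Fin n) :
    i ∈ M ↔ ∑ k, ν k * (e i k : ℝ) ≤ s := by
  constructor
  · intro hi
    have hle := ordC_le_sum (e := e) (ν := ν) (M.erase i)
    rw [card_erase_of_mem hi, hM] at hle
    have hsum := add_sum_erase M (fun i => ∑ k, ν k * (e i k : ℝ)) hi
    simp only [phiC] at h₁ hsum
    linarith
  · contrapose!
    intro hi
    have hle := ordC_le_sum (e := e) (ν := ν) (insert i M)
    have hjn := card_finset_fin_le (insert i M)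
    rw [card_insert_of_notMem hi, hM] at hle hjn
    rw [sum_insert hi, hmin] at hle
    have := h₂ hjn
    simp only [phiC, Nat.add_sub_cancel] at this
    linarith

/-- Indices of a minimizing `j`-element subset are ordered in the same way by two vectors which
have the same minimizing `r`-element subsets for all `r ≤ j`. -/
theorem le_of_le_of_sum_eq_ordC {j : ℕ} {ν' : Fin d → ℝ} {s : ℝ} {A : Finset (Fin n)}
    (hb : ∀ r : ℕ, 1 ≤ r → r ≤ j → ∀ S : Finset (Fin n), S.card = r →
      ∑ i ∈ S, ∑ k, ν k * (e i k : ℝ) = ordC e r ν →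
        ∑ i ∈ S, ∑ k, ν' k * (e i k : ℝ) = ordC e r ν')
    (hA : ∀ i, i ∈ A ↔ ∑ k, ν k * (e i k : ℝ) ≤ s) (hAj : A.card = j) :
    ∀ a ∈ A, ∀ b ∈ A, ∑ k, ν k * (e a k : ℝ) ≤ ∑ k, ν k * (e b k : ℝ) →
      ∑ k, ν' k * (e a k : ℝ) ≤ ∑ k, ν' k * (e b k : ℝ) := by
  intro a ha b hbA hab
  rcases eq_or_ne a b with rfl | hne
  · exact le_rfl
  set w : Fin n → ℝ := fun i => ∑ k, ν k * (e i k : ℝ) with hw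
  set B : Finset (Fin n) := insert a ({i | w i < w b} : Finset (Fin n)) with hB
  have haB : a ∈ B := mem_insert_self _ _
  have hbB : b ∉ B := by simp [hB, hne.symm]
  have hBA : B ⊆ A := by
    refine insert_subset ha fun i hi => (hA i).2 ?_
    exact (mem_filter.1 hi).2.le.trans ((hA b).1 hbA)
  have hmin := hb B.card (card_pos.2 ⟨a, haB⟩) (hAj ▸ card_le_card hBA) B rfl
    ((sum_eq_ordC_iff rfl).2 fun T hT => sum_le_sum_of_threshold (w := w) (c := w b) hT (by
      intro i hi
      rcases mem_insert.1 hi with rfl | hi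
      exacts [hab, (mem_filter.1 hi).2.le]) (by
      intro i hi
      by_contra! hlt
      exact hi (mem_insert_of_mem (by simpa using hlt))))
  have hle := (sum_eq_ordC_iff rfl).1 hmin _ (card_insert_erase_eq haB hbB)
  rw [sum_insert_erase_eq (w := fun i => ∑ k, ν' k * (e i k : ℝ)) haB hbB] at hle
  linarith

theorem linearIndependent_real_iff {S : Finset (Fin n)} :
    LinearIndependent ℝ (fun i : S => ((fun kk => (e i.1 kk : ℝ)) : Fin d → ℝ)) ↔
      LinearIndepOn ℚ (fun i kk => (e i kk : ℚ)) (S : Set (Fin n)) := by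
  have := linearIndependent_algebraMap_comp_iff (S := ℝ)
    (v := fun (i : (S : Set (Fin n))) kk => (e i.1 kk : ℚ))
  simpa [LinearIndepOn, Function.comp_def] using this

theorem sum_eq_ordJ_iff {S : Finset (Fin n)} {r : ℕ} (hS : S.card = r)
    (hind : LinearIndepOn ℚ (fun i kk => (e i kk : ℚ)) (S : Set (Fin n))) :
    ∑ i ∈ S, ∑ k, ν k * (e i k : ℝ) = ordJ e r ν ↔
      ∀ T : Finset (Fin n), T.card = S.card ∧
        LinearIndepOn ℚ (fun i kk => (e i kk : ℚ)) (T : Set (Fin n)) →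
        ∑ i ∈ S, ∑ k, ν k * (e i k : ℝ) ≤ ∑ i ∈ T, ∑ k, ν k * (e i k : ℝ) := by
  subst hS
  simp only [ordJ, linearIndependent_real_iff, ← and_assoc]
  exact eq_sInf_iff_forall_le (P := fun T : Finset (Fin n) => T.card = S.card ∧
    LinearIndepOn ℚ (fun i kk => (e i kk : ℚ)) (T : Set (Fin n)))
    (f := fun T => ∑ i ∈ T, ∑ k, ν k * (e i k : ℝ)) ⟨rfl, hind⟩

end Orders

theorem stmt7 (d n : ℕ) (e : Fin n → Fin d → ℤ)
    (j : ℕ) (hj1 : 1 ≤ j) (hjn : j ≤ n)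
    (ν ν' : Fin d → ℝ) (s s' : ℝ)
    (ha : ∀ i, 0 < ∑ k, ν k * (e i k : ℝ)) (ha' : ∀ i, 0 < ∑ k, ν' k * (e i k : ℝ))
    (hb : ∀ r : ℕ, 1 ≤ r → r ≤ j → ∀ S : Finset (Fin n), S.card = r →
      ((∑ i ∈ S, ∑ k, ν k * (e i k : ℝ)) = ordC e r ν ↔
        (∑ i ∈ S, ∑ k, ν' k * (e i k : ℝ)) = ordC e r ν'))
    (hc1 : phiC e j ν ≤ s) (hc2 : j < n → s < phiC e (j + 1) ν)
    (hd1 : phiC e j ν' ≤ s') (hd2 : j < n → s' < phiC e (j + 1) ν')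
    (l : ℕ)
    (hl : l = Module.finrank ℚ (Submodule.span ℚ {x : Fin d → ℚ |
      ∃ i, (∑ k, ν k * (e i k : ℝ)) ≤ s ∧ x = fun kk => (e i kk : ℚ)})) :
    l = Module.finrank ℚ (Submodule.span ℚ {x : Fin d → ℚ |
      ∃ i, (∑ k, ν' k * (e i k : ℝ)) ≤ s' ∧ x = fun kk => (e i kk : ℚ)}) ∧
    ∀ r : ℕ, 1 ≤ r → r ≤ l → ∀ S : Finset (Fin n), S.card = r →
      LinearIndependent ℝ (fun i : S => ((fun kk => (e i.1 kk : ℝ)) : Fin d → ℝ)) →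
      ((∑ i ∈ S, ∑ k, ν k * (e i k : ℝ)) = ordJ e r ν ↔
        (∑ i ∈ S, ∑ k, ν' k * (e i k : ℝ)) = ordJ e r ν') := by
  obtain ⟨A, hAj, hAmin⟩ := exists_sum_eq_ordC (e := e) (ν := ν) hjn
  have hAmin' := (hb j hj1 le_rfl A hAj).1 hAmin
  have hA := mem_iff_le_of_sum_eq_ordC hc1 hc2 hAj hAmin
  have hA' := mem_iff_le_of_sum_eq_ordC hd1 hd2 hAj hAmin'
  have himage : ∀ (μ : Fin d → ℝ) (t : ℝ), (∀ i, i ∈ A ↔ ∑ k, μ k * (e i k : ℝ) ≤ t) →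
      {x : Fin d → ℚ | ∃ i, (∑ k, μ k * (e i k : ℝ)) ≤ t ∧ x = fun kk => (e i kk : ℚ)} =
        (fun i kk => (e i kk : ℚ)) '' (A : Set (Fin n)) := by
    intro μ t h
    ext x
    simp [h, eq_comm]
  rw [himage ν s hA] at hl
  rw [himage ν' s' hA']
  refine ⟨hl, fun r _ hrl S hS hind => ?_⟩
  rw [linearIndependent_real_iff] at hind
  have hrank := hS.trans_le (hrl.trans hl.le)
  rw [sum_eq_ordJ_iff hS hind, sum_eq_ordJ_iff hS hind]
  constructor
  · exact hind.forall_sum_le_of_sublevel hA hA' (le_of_le_of_sum_eq_ordC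
      (fun r h₁ h₂ S hS => (hb r h₁ h₂ S hS).1) hA hAj) hrank
  · exact hind.forall_sum_le_of_sublevel hA' hA (le_of_le_of_sum_eq_ordC
      (fun r h₁ h₂ S hS => (hb r h₁ h₂ S hS).2) hA' hAj) hrank
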